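/- There exists a continuous function Ξ from Baire space ℕ^ℕ (sequences of positive integers) to [0,1] ⊆ ℝ such that for every sequence f of positive integers whose subsequence of first occurrences enumerates the positive integers in increasing order: (a) if no positive integer occurs infinitely often in f, then Ξ(f) is absolutely normal; and (b) if all but finitely many positive integers occur infinitely often in f, then Ξ(f) is absolutely abnormal. -/

import Mathlib

open Filter

/-- The `(i+1)`-st digit (for `i = 0, 1, 2, ...`) of the base-`b` expansion of the
fractional part of a real `R`.  For `R ∈ [0,1)` this is the unique expansion of `R`
whose digits are not eventually all equal to `b - 1`; for general `R`, normality is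
defined via the fractional part. -/
noncomputable def rdigit (b : ℕ) (R : ℝ) (i : ℕ) : ℕ :=
  (⌊Int.fract R * (b : ℝ) ^ (i + 1)⌋).toNat % b

/-- The block consisting of the first `n` digits of the base-`b` expansion of `R`. -/
noncomputable def rdigits (b : ℕ) (R : ℝ) (n : ℕ) : List ℕ := (List.range n).map (rdigit b R)

/-- `R` is simply normal to base `b`: every digit `d < b` occurs with limiting
frequency `1/b` in the base-`b` expansion of `R`. -/
def SimplyNormal (b : ℕ) (R : ℝ) : Prop :=
  ∀ d < b, Tendsto (fun n => ((rdigits b R n).count d : ℝ) / n) atTop (nhds (1 / (b : ℝ)))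

/-- `R` is normal to base `b`: it is simply normal to base `b ^ ℓ` for every `ℓ ≥ 1`. -/
def NormalBase (b : ℕ) (R : ℝ) : Prop := ∀ ℓ : ℕ, 1 ≤ ℓ → SimplyNormal (b ^ ℓ) R

/-- `R` is absolutely normal: normal to every base `b ≥ 2`. -/
def AbsolutelyNormal (R : ℝ) : Prop := ∀ b : ℕ, 2 ≤ b → NormalBase b R

/-- `R` is absolutely abnormal: normal to no base `b ≥ 2`. -/
def AbsolutelyAbnormal (R : ℝ) : Prop := ∀ b : ℕ, 2 ≤ b → ¬ NormalBase b R

/-!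
The point is the limit of a nested sequence of grid cells. The exceptional set for a digit in base
`c` is periodic, so in any cell it has, past the depth of the cell, relative measure at most `c`
times its measure in the unit interval. Hence every cell contains an absolutely normal point whose
discrepancies past the depth of the cell obey a bound that does not depend on the cell. The next
cell follows the digits of such a point for a long time and then, in the base `b` coded by
`v = f i`, prescribes a block of zeros preceded by `v + 1` times as many digits. In every base this
block costs a relative discrepancy of about `1 / (v + 1)`, so the limit is absolutely normal when
`f` tends to infinity. If `v` recurs infinitely often, then so do zero blocks of the same relative
length, and the limit is not normal in the base coded by `v`; every base is coded by arbitrarily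
large values.
-/

open MeasureTheory ProbabilityTheory Asymptotics Topology

section Digits

variable {c d j m n : ℕ} {x y : ℝ}

lemma natCast_rdigit (hc : 0 < c) (x : ℝ) (j : ℕ) :
    (rdigit c x j : ℤ) = ⌊x * (c : ℝ) ^ (j + 1)⌋ % c := by
  have hfract : x * (c : ℝ) ^ (j + 1) =
      Int.fract x * (c : ℝ) ^ (j + 1) + ((⌊x⌋ * (c : ℤ) ^ j * c : ℤ) : ℝ) := by
    push_cast
    linear_combination (-(c : ℝ) ^ (j + 1)) * Int.fract_add_floor x
  have hnonneg : 0 ≤ ⌊Int.fract x * (c : ℝ) ^ (j + 1)⌋ :=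
    Int.floor_nonneg.2 (mul_nonneg (Int.fract_nonneg x) (by positivity))
  rw [rdigit, Int.natCast_mod, Int.toNat_of_nonneg hnonneg, hfract, Int.floor_add_intCast,
    Int.add_mul_emod_self_right]

lemma rdigit_pow_mul (hc : 0 < c) (x : ℝ) (s j : ℕ) :
    rdigit c ((c : ℝ) ^ s * x) j = rdigit c x (s + j) := by
  zify
  rw [natCast_rdigit hc, natCast_rdigit hc]
  congr 2
  ring

lemma rdigit_periodic (c j : ℕ) : Function.Periodic (rdigit c · j) 1 := fun x => by
  simp only [rdigit, Int.fract_add_one]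

lemma rdigit_eq_of_floor_eq (hc : 0 < c) (h : ⌊x * (c : ℝ) ^ n⌋ = ⌊y * (c : ℝ) ^ n⌋)
    (hj : j < n) : rdigit c x j = rdigit c y j := by
  obtain ⟨k, rfl⟩ := Nat.exists_eq_add_of_lt hj
  have floor_eq_div (z : ℝ) :
      ⌊z * (c : ℝ) ^ (j + 1)⌋ = ⌊z * (c : ℝ) ^ (j + k + 1)⌋ / ((c ^ k : ℕ) : ℤ) := by
    rw [← Int.floor_div_natCast]
    congr 1
    push_cast
    field_simp
    ring
  zify
  rw [natCast_rdigit hc, natCast_rdigit hc, floor_eq_div x, floor_eq_div y, h]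

lemma measurable_rdigit (c j : ℕ) : Measurable (rdigit c · j) :=
  (measurable_from_top (f := fun z : ℤ => z.toNat % c)).comp
    (Int.measurable_floor.comp (measurable_fract.mul_const _))

lemma count_rdigits (c d : ℕ) (x : ℝ) (n : ℕ) :
    (rdigits c x n).count d = ∑ j ∈ Finset.range n, if rdigit c x j = d then 1 else 0 := by
  induction n with
  | zero => rfl
  | succ n ih =>
    rw [Finset.sum_range_succ, ← ih]
    simp [rdigits, List.range_succ, List.count_singleton]

/-- The discrepancy of the digit `d` among the first `n` base-`c` digits of `x`: the number of its
occurrences minus the expected number `n / c`. -/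
noncomputable def discrepancy (c d : ℕ) (x : ℝ) (n : ℕ) : ℝ := (rdigits c x n).count d - n / c

lemma discrepancy_zero (c d : ℕ) (x : ℝ) : discrepancy c d x 0 = 0 := by
  simp [discrepancy, rdigits]

lemma discrepancy_succ (c d : ℕ) (x : ℝ) (n : ℕ) :
    discrepancy c d x (n + 1) =
      discrepancy c d x n + ((if rdigit c x n = d then 1 else 0) - 1 / c) := by
  rw [discrepancy, discrepancy, count_rdigits, count_rdigits, Finset.sum_range_succ]
  push_cast
  ring

lemma discrepancy_sub_eq_sum (c d : ℕ) (x : ℝ) (h : m ≤ n) :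
    discrepancy c d x n - discrepancy c d x m =
      ∑ j ∈ Finset.Ico m n, ((if rdigit c x j = d then 1 else 0) - 1 / (c : ℝ)) := by
  rw [← Finset.sum_Ico_sub (discrepancy c d x) h]
  exact Finset.sum_congr rfl fun j _ => by rw [discrepancy_succ, add_sub_cancel_left]

lemma discrepancy_pow_mul (hc : 0 < c) (d : ℕ) (x : ℝ) (s n : ℕ) :
    discrepancy c d ((c : ℝ) ^ s * x) n =
      discrepancy c d x (s + n) - discrepancy c d x s := by
  induction n with
  | zero => simp [discrepancy_zero]
  | succ n ih => rw [discrepancy_succ, ih, rdigit_pow_mul hc, ← add_assoc, discrepancy_succ]; ring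

lemma discrepancy_periodic (c d : ℕ) : Function.Periodic (discrepancy c d) 1 := fun x => by
  have hdigit : rdigit c (x + 1) = rdigit c x := funext fun j => rdigit_periodic c j x
  ext n
  simp only [discrepancy, rdigits, hdigit]

lemma discrepancy_eq_of_floor_eq (hc : 0 < c) (d : ℕ)
    (h : ⌊x * (c : ℝ) ^ n⌋ = ⌊y * (c : ℝ) ^ n⌋) (hm : m ≤ n) :
    discrepancy c d x m = discrepancy c d y m := by
  have hdigits : rdigits c x m = rdigits c y m := List.map_congr_left fun j hj =>
    rdigit_eq_of_floor_eq hc h ((List.mem_range.1 hj).trans_le hm)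
  rw [discrepancy, discrepancy, hdigits]

lemma abs_discrepancy_sub_le (hc : 0 < c) (d : ℕ) (x : ℝ) (h : m ≤ n) :
    |discrepancy c d x n - discrepancy c d x m| ≤ n - m := by
  have hc' : (1 : ℝ) / c ≤ 1 := div_le_one_of_le₀ (mod_cast hc) (by positivity)
  have hstep (j : ℕ) : |(if rdigit c x j = d then (1 : ℝ) else 0) - 1 / c| ≤ 1 := by
    have : (0 : ℝ) ≤ 1 / c := by positivity
    split_ifs <;> rw [abs_le] <;> constructor <;> linarith
  rw [discrepancy_sub_eq_sum c d x h]
  calc _ ≤ ∑ _ ∈ Finset.Ico m n, (1 : ℝ) :=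
        (Finset.abs_sum_le_sum_abs _ _).trans (Finset.sum_le_sum fun j _ => hstep j)
    _ = n - m := by simp [Nat.cast_sub h]

lemma discrepancy_sub_of_forall_rdigit_ne (h : m ≤ n)
    (hd : ∀ j, m ≤ j → j < n → rdigit c x j ≠ d) :
    discrepancy c d x n - discrepancy c d x m = -(((n : ℝ) - m) / c) := by
  have hterm : ∀ j ∈ Finset.Ico m n,
      (if rdigit c x j = d then 1 else 0) - 1 / (c : ℝ) = -(1 / c) := fun j hj => by
    rw [if_neg (hd j (Finset.mem_Ico.1 hj).1 (Finset.mem_Ico.1 hj).2), zero_sub]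
  rw [discrepancy_sub_eq_sum c d x h, Finset.sum_congr rfl hterm, Finset.sum_const, Nat.card_Ico,
    nsmul_eq_mul, Nat.cast_sub h]
  ring

lemma measurable_discrepancy (c d n : ℕ) : Measurable (discrepancy c d · n) := by
  induction n with
  | zero => simpa only [discrepancy_zero] using measurable_const
  | succ n ih =>
    simp only [discrepancy_succ]
    exact ih.add ((Measurable.ite (measurable_rdigit c n (measurableSet_singleton d))
      measurable_const measurable_const).sub_const _)

lemma discrepancy_isLittleO_iff (c d : ℕ) (x : ℝ) :
    discrepancy c d x =o[atTop] (fun n : ℕ => (n : ℝ)) ↔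
      Tendsto (fun n => ((rdigits c x n).count d : ℝ) / n) atTop (𝓝 (1 / (c : ℝ))) := by
  rw [isLittleO_iff_tendsto' (by filter_upwards [eventually_gt_atTop 0] with n hn h; simp_all),
    ← tendsto_sub_nhds_zero_iff (x := 1 / (c : ℝ))]
  refine tendsto_congr' ?_
  filter_upwards [eventually_gt_atTop 0] with n hn
  rw [discrepancy]
  field_simp

lemma simplyNormal_iff_isLittleO (c : ℕ) (x : ℝ) :
    SimplyNormal c x ↔ ∀ d < c, discrepancy c d x =o[atTop] (fun n : ℕ => (n : ℝ)) :=
  forall₂_congr fun d _ => (discrepancy_isLittleO_iff c d x).symm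

lemma absolutelyNormal_iff (x : ℝ) : AbsolutelyNormal x ↔ ∀ c, 2 ≤ c → SimplyNormal c x := by
  refine ⟨fun h c hc => by simpa using h c hc 1 le_rfl, fun h b hb ℓ hℓ => h _ ?_⟩
  exact hb.trans (Nat.le_self_pow (by lia) b)

end Digits

section Periodic

variable {G : Set ℝ}

/-- Lebesgue measure on `[0, 1)`, extended by zero to a probability measure on `ℝ`. -/
noncomputable abbrev unitVolume : Measure ℝ := volume.restrict (Set.Ico 0 1)

instance : IsProbabilityMeasure unitVolume := ⟨by simp⟩

lemma volume_inter_Ico_add_one (hG : MeasurableSet G) (hper : Function.Periodic (· ∈ G) 1)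
    (t : ℝ) : volume (G ∩ Set.Ico t (t + 1)) = unitVolume G := by
  have inter_Ioc (u : ℝ) : volume (G ∩ Set.Ico u (u + 1)) = volume (G ∩ Set.Ioc u (u + 1)) :=
    measure_congr ((ae_eq_refl G).inter Ico_ae_eq_Ioc)
  have hvadd : ∀ g : AddSubgroup.zmultiples (1 : ℝ), (g +ᵥ · : ℝ → ℝ) ⁻¹' G = G := by
    rintro ⟨_, k, rfl⟩
    ext x
    simpa [AddSubgroup.vadd_def, add_comm] using hper.int_mul k x
  have hfund := (isAddFundamentalDomain_Ioc (one_pos (α := ℝ)) t).measure_set_eq (μ := volume)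
    (isAddFundamentalDomain_Ioc one_pos 0) hG hvadd
  rw [inter_Ioc, hfund, ← inter_Ioc, zero_add, Measure.restrict_apply hG]

lemma volume_inter_Ico_add_natCast (hG : MeasurableSet G) (hper : Function.Periodic (· ∈ G) 1)
    (t : ℝ) (n : ℕ) : volume (G ∩ Set.Ico t (t + n)) = n * unitVolume G := by
  induction n with
  | zero => simp
  | succ n ih =>
    have hsplit : G ∩ Set.Ico t (t + (n + 1 : ℕ)) =
        (G ∩ Set.Ico t (t + n)) ∪ (G ∩ Set.Ico (t + n) (t + n + 1)) := by
      rw [← Set.inter_union_distrib_left, Set.Ico_union_Ico_eq_Ico (by simp) (by simp),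
        Nat.cast_succ, add_assoc]
    have hdisj : Disjoint (G ∩ Set.Ico t (t + n)) (G ∩ Set.Ico (t + n) (t + n + 1)) :=
      (Set.Ico_disjoint_Ico_same).mono Set.inter_subset_right Set.inter_subset_right
    rw [hsplit, measure_union hdisj (hG.inter measurableSet_Ico), ih,
      volume_inter_Ico_add_one hG hper, Nat.cast_succ, add_mul, one_mul]

lemma volume_preimage_mul_inter_Ico (hG : MeasurableSet G) (hper : Function.Periodic (· ∈ G) 1)
    {r : ℝ} (hr : 0 < r) (a : ℝ) (n : ℕ) :
    volume ((r * ·) ⁻¹' G ∩ Set.Ico a (a + n / r)) = ENNReal.ofReal (n / r) * unitVolume G := by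
  have hscale : (r * ·) ⁻¹' G ∩ Set.Ico a (a + n / r) =
      (r * ·) ⁻¹' (G ∩ Set.Ico (r * a) (r * a + n)) := by
    rw [Set.preimage_inter, Set.preimage_const_mul_Ico₀ _ _ hr, add_div,
      mul_div_cancel_left₀ _ hr.ne']
  rw [hscale, Real.volume_preimage_mul_left hr.ne', volume_inter_Ico_add_natCast hG hper,
    abs_of_pos (inv_pos.2 hr), ← mul_assoc, div_eq_inv_mul, ENNReal.ofReal_mul (by positivity),
    ENNReal.ofReal_natCast]

lemma unitVolume_preimage_natCast_mul (hG : MeasurableSet G)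
    (hper : Function.Periodic (· ∈ G) 1) {n : ℕ} (hn : 0 < n) :
    unitVolume (((n : ℝ) * ·) ⁻¹' G) = unitVolume G := by
  have hn' : (0 : ℝ) < n := mod_cast hn
  have h := volume_preimage_mul_inter_Ico hG hper hn' 0 n
  rw [div_self hn'.ne', zero_add, ENNReal.ofReal_one, one_mul] at h
  rw [← h, Measure.restrict_apply (hG.preimage (measurable_const_mul _))]

end Periodic

section Borel

variable {c d i j : ℕ}

/-- The set of reals whose base-`c` digit at position `j` is `d`. -/
def digitSet (c d j : ℕ) : Set ℝ := {x | rdigit c x j = d}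

lemma measurableSet_digitSet (c d j : ℕ) : MeasurableSet (digitSet c d j) :=
  measurable_rdigit c j (measurableSet_singleton d)

lemma digitSet_periodic (c d j : ℕ) : Function.Periodic (· ∈ digitSet c d j) 1 := fun x => by
  simp only [digitSet, Set.mem_ofPred_eq, rdigit_periodic c j x]

lemma indicator_digitSet (c d j : ℕ) (x : ℝ) :
    (digitSet c d j).indicator (fun _ => (1 : ℝ)) x = if rdigit c x j = d then 1 else 0 := by
  by_cases h : rdigit c x j = d <;> simp [Set.indicator, digitSet, h]

lemma digitSet_add (hc : 0 < c) (d s j : ℕ) :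
    digitSet c d (s + j) = (((c ^ s : ℕ) : ℝ) * ·) ⁻¹' digitSet c d j := by
  ext x
  simp only [digitSet, Set.mem_preimage, Set.mem_ofPred_eq, Nat.cast_pow, rdigit_pow_mul hc]

lemma digitSet_zero_inter_Ico (hd : d < c) :
    digitSet c d 0 ∩ Set.Ico 0 1 = Set.Ico ((d : ℝ) / c) (d / c + (1 : ℕ) / c) := by
  have hc : (0 : ℝ) < c := mod_cast d.zero_le.trans_lt hd
  have hd' : (d : ℝ) + 1 ≤ c := mod_cast hd
  have mem_Ico_iff (x : ℝ) :
      x ∈ Set.Ico ((d : ℝ) / c) (d / c + (1 : ℕ) / c) ↔ ⌊x * c⌋ = d := by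
    rw [Int.floor_eq_iff, Set.mem_Ico, div_le_iff₀ hc, ← add_div, lt_div_iff₀ hc]
    simp
  ext x
  rw [mem_Ico_iff, Set.mem_inter_iff, digitSet, Set.mem_ofPred_eq, ← @Nat.cast_inj ℤ,
    natCast_rdigit (mod_cast hc), zero_add, pow_one]
  constructor
  · rintro ⟨hx, hx0, hx1⟩
    have h0 : 0 ≤ ⌊x * c⌋ := Int.floor_nonneg.2 (by positivity)
    have h1 : ⌊x * c⌋ < c := Int.floor_lt.2 (by push_cast; nlinarith)
    rwa [Int.emod_eq_of_lt h0 h1] at hx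
  · intro hx
    obtain ⟨h0, h1⟩ := Int.floor_eq_iff.1 hx
    push_cast at h0 h1
    refine ⟨by rw [hx]; exact Int.emod_eq_of_lt (by positivity) (mod_cast hd), ?_, ?_⟩
    · exact nonneg_of_mul_nonneg_left (d.cast_nonneg.trans h0) hc
    · exact lt_of_mul_lt_mul_right (by linarith) hc.le

lemma unitVolume_digitSet_zero_inter {G : Set ℝ} (hG : MeasurableSet G)
    (hper : Function.Periodic (· ∈ G) 1) (hd : d < c) :
    unitVolume (digitSet c d 0 ∩ ((c : ℝ) * ·) ⁻¹' G) = ENNReal.ofReal (1 / c) * unitVolume G := by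
  have hc : (0 : ℝ) < c := mod_cast d.zero_le.trans_lt hd
  rw [Measure.restrict_apply' measurableSet_Ico, Set.inter_right_comm, digitSet_zero_inter_Ico hd,
    Set.inter_comm, volume_preimage_mul_inter_Ico hG hper hc, Nat.cast_one]

lemma unitVolume_digitSet (hd : d < c) (j : ℕ) :
    unitVolume (digitSet c d j) = ENNReal.ofReal (1 / c) := by
  have hc : 0 < c := d.zero_le.trans_lt hd
  have h := unitVolume_digitSet_zero_inter MeasurableSet.univ (fun _ => rfl) hd
  rw [← add_zero j, digitSet_add hc, unitVolume_preimage_natCast_mul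
    (measurableSet_digitSet c d 0) (digitSet_periodic c d 0) (pow_pos hc j)]
  simpa using h

lemma unitVolume_digitSet_inter_of_lt (hd : d < c) (hij : i < j) :
    unitVolume (digitSet c d i ∩ digitSet c d j) =
      unitVolume (digitSet c d i) * unitVolume (digitSet c d j) := by
  have hc : 0 < c := d.zero_le.trans_lt hd
  obtain ⟨k, rfl⟩ := Nat.exists_eq_add_of_lt hij
  have hG := measurableSet_digitSet c d k
  have hper : Function.Periodic (· ∈ digitSet c d 0 ∩ ((c : ℝ) * ·) ⁻¹' digitSet c d k) 1 :=
    fun x => by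
      have h0 := digitSet_periodic c d 0 x
      have hk := (digitSet_periodic c d k).nat_mul c (c * x)
      simp only [Set.mem_inter_iff, Set.mem_preimage, mul_add] at h0 hk ⊢
      rw [h0, hk]
  have hshift : digitSet c d i ∩ digitSet c d (i + k + 1) = (((c ^ i : ℕ) : ℝ) * ·) ⁻¹'
      (digitSet c d 0 ∩ ((c : ℝ) * ·) ⁻¹' digitSet c d k) := by
    have hsucc := digitSet_add hc d 1 k
    rw [pow_one] at hsucc
    rw [← hsucc, Set.preimage_inter, ← digitSet_add hc, ← digitSet_add hc, add_zero, add_assoc,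
      add_comm k]
  rw [hshift, unitVolume_preimage_natCast_mul
    ((measurableSet_digitSet c d 0).inter (hG.preimage (measurable_const_mul _))) hper
    (pow_pos hc i), unitVolume_digitSet_zero_inter hG (digitSet_periodic c d k) hd]
  simp only [unitVolume_digitSet hd]

lemma indepSet_digitSet (hd : d < c) (hij : i ≠ j) :
    IndepSet (digitSet c d i) (digitSet c d j) unitVolume := by
  rw [indepSet_iff_measure_inter_eq_mul (measurableSet_digitSet c d i)
    (measurableSet_digitSet c d j) unitVolume]
  rcases hij.lt_or_gt with h | h
  · exact unitVolume_digitSet_inter_of_lt hd h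
  · rw [Set.inter_comm, unitVolume_digitSet_inter_of_lt hd h, mul_comm]

lemma indepFun_indicator_of_indepSet {Ω β : Type*} [MeasurableSpace Ω] [MeasurableSpace β] [Zero β]
    {μ : Measure Ω} {s t : Set Ω} (h : IndepSet s t μ) (b : β) :
    s.indicator (fun _ => b) ⟂ᵢ[μ] t.indicator fun _ => b := by
  rw [IndepFun_iff_Indep]
  have comap_le (u : Set Ω) : MeasurableSpace.comap (u.indicator fun _ => b) inferInstance ≤
      MeasurableSpace.generateFrom {u} := measurable_iff_comap_le.1 <|
    measurable_const.indicator (MeasurableSpace.measurableSet_generateFrom rfl)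
  exact indep_of_indep_of_le_left (indep_of_indep_of_le_right h (comap_le t)) (comap_le s)

lemma identDistrib_indicator_digitSet (hc : 0 < c) (d j : ℕ) :
    IdentDistrib ((digitSet c d j).indicator fun _ => (1 : ℝ))
      ((digitSet c d 0).indicator fun _ => 1) unitVolume unitVolume := by
  have hmeas (k : ℕ) : Measurable ((digitSet c d k).indicator fun _ => (1 : ℝ)) :=
    measurable_const.indicator (measurableSet_digitSet c d k)
  refine ⟨(hmeas j).aemeasurable, (hmeas 0).aemeasurable, ?_⟩
  ext A hA
  have hper : Function.Periodic (· ∈ (digitSet c d 0).indicator (fun _ => (1 : ℝ)) ⁻¹' A) 1 :=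
    fun x => by
      simp only [Set.mem_preimage, indicator_digitSet, rdigit_periodic c 0 x]
  rw [Measure.map_apply (hmeas j) hA, Measure.map_apply (hmeas 0) hA, ← add_zero j,
    digitSet_add hc, ← unitVolume_preimage_natCast_mul (hmeas 0 hA) hper (pow_pos hc j)]
  rfl

theorem ae_discrepancy_isLittleO (hd : d < c) :
    ∀ᵐ x ∂unitVolume, discrepancy c d x =o[atTop] (fun n : ℕ => (n : ℝ)) := by
  have hint : ∫ x, (digitSet c d 0).indicator (fun _ => (1 : ℝ)) x ∂unitVolume = 1 / c := by
    rw [integral_indicator_const _ (measurableSet_digitSet c d 0), Measure.real,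
      unitVolume_digitSet hd, ENNReal.toReal_ofReal (by positivity), smul_eq_mul, mul_one]
  have hlaw := strong_law_ae_real (μ := unitVolume)
    (fun j => (digitSet c d j).indicator fun _ => (1 : ℝ))
    ((integrable_const _).indicator (measurableSet_digitSet c d 0))
    (fun i j hij => indepFun_indicator_of_indepSet (indepSet_digitSet hd hij) 1)
    (identDistrib_indicator_digitSet (d.zero_le.trans_lt hd) d)
  filter_upwards [hlaw] with x hx
  rw [discrepancy_isLittleO_iff, ← hint]
  simpa only [count_rdigits, Nat.cast_sum, Nat.cast_ite, Nat.cast_one, Nat.cast_zero,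
    indicator_digitSet] using hx

theorem ae_absolutelyNormal : ∀ᵐ x ∂unitVolume, AbsolutelyNormal x := by
  simp only [absolutelyNormal_iff, simplyNormal_iff_isLittleO]
  exact ae_all_iff.2 fun c => ae_all_iff.2 fun _ => ae_all_iff.2 fun d => ae_all_iff.2 fun hd =>
    ae_discrepancy_isLittleO hd

end Borel

/-- The cell `[num / den, (num + 1) / den]` of a uniform grid on the unit interval. -/
structure GridCell where
  num : ℕ
  den : ℕ
  num_lt_den : num < den

namespace GridCell

variable (I : GridCell)

/-- Grid cells are the finite data from which a point of `[0, 1]` is built, so they carry the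
discrete topology. -/
instance : TopologicalSpace GridCell := ⊥

instance : DiscreteTopology GridCell := ⟨rfl⟩

/-- The left endpoint of a grid cell. -/
noncomputable def left : ℝ := I.num / I.den

/-- The right endpoint of a grid cell. -/
noncomputable def right : ℝ := (I.num + 1) / I.den

/-- The number of base-`c` digits after which the base-`c` grid is at least as fine as the cell. -/
def depth (c : ℕ) : ℕ := Nat.clog c I.den

lemma den_pos : 0 < I.den := I.num.zero_le.trans_lt I.num_lt_den

lemma right_eq : I.right = I.left + 1 / I.den := add_div _ _ _

lemma left_lt_right : I.left < I.right := by
  have := I.den_pos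
  rw [right_eq]
  exact lt_add_of_pos_right _ (by positivity)

lemma left_nonneg : 0 ≤ I.left := by
  unfold left
  positivity

lemma right_le_one : I.right ≤ 1 :=
  div_le_one_of_le₀ (mod_cast I.num_lt_den) (by positivity)

end GridCell

section UniformBound

variable {c d k Q : ℕ} {δ : ℝ}

lemma exists_forall_abs_le_of_isLittleO {f : ℕ → ℝ} (hf : f =o[atTop] (fun n : ℕ => (n : ℝ)))
    (hδ : 0 < δ) : ∃ M : ℕ, ∀ n, |f n| ≤ δ * n + M := by
  obtain ⟨N, hN⟩ := eventually_atTop.1 (isLittleO_iff.1 hf hδ)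
  obtain ⟨M, hM⟩ := exists_nat_ge (∑ n ∈ Finset.range N, |f n|)
  refine ⟨M, fun n => ?_⟩
  have : (0 : ℝ) ≤ M := M.cast_nonneg
  have hδn : 0 ≤ δ * n := by positivity
  rcases le_or_gt N n with h | h
  · have := hN n h
    simp only [Real.norm_eq_abs, Nat.abs_cast] at this
    linarith
  · have := Finset.single_le_sum (f := fun n => |f n|) (fun _ _ => abs_nonneg _)
      (Finset.mem_range.2 h)
    linarith

/-- The reals for which the bound `δ * n + M` on the discrepancy of the digit `d` in base `c` is
violated for some `n`. -/
def discrepantSet (c d : ℕ) (δ : ℝ) (M : ℕ) : Set ℝ :=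
  {x | ∃ n : ℕ, δ * n + M < |discrepancy c d x n|}

lemma measurableSet_discrepantSet (c d : ℕ) (δ : ℝ) (M : ℕ) :
    MeasurableSet (discrepantSet c d δ M) := by
  simp only [discrepantSet, Set.ofPred_exists]
  exact MeasurableSet.iUnion fun n => measurableSet_lt measurable_const
    (continuous_abs.measurable.comp (measurable_discrepancy c d n))

lemma discrepantSet_periodic (c d : ℕ) (δ : ℝ) (M : ℕ) :
    Function.Periodic (· ∈ discrepantSet c d δ M) 1 := fun x => by
  simp only [discrepantSet, Set.mem_ofPred_eq, discrepancy_periodic c d x]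

lemma tendsto_unitVolume_discrepantSet (hd : d < c) (hδ : 0 < δ) :
    Tendsto (fun M => unitVolume (discrepantSet c d δ M)) atTop (𝓝 0) := by
  have hanti : Antitone (discrepantSet c d δ) := fun M M' hM x ⟨n, hn⟩ =>
    ⟨n, (add_le_add_right (Nat.cast_le.2 hM) _).trans_lt hn⟩
  have hnull : unitVolume (⋂ M, discrepantSet c d δ M) = 0 := by
    refine measure_mono_null (fun x hx => ?_) (ae_iff.1 (ae_discrepancy_isLittleO hd))
    intro hlittle
    obtain ⟨M, hM⟩ := exists_forall_abs_le_of_isLittleO hlittle hδ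
    obtain ⟨n, hn⟩ := Set.mem_iInter.1 hx M
    exact hn.not_ge (hM n)
  rw [← hnull]
  exact tendsto_measure_iInter_atTop
    (fun M => (measurableSet_discrepantSet c d δ M).nullMeasurableSet) hanti
    ⟨0, measure_ne_top _ _⟩

lemma pow_clog_le_mul (hc : 2 ≤ c) (hQ : 0 < Q) : c ^ Nat.clog c Q ≤ c * Q := by
  rcases (Nat.succ_le_of_lt hQ).eq_or_lt with rfl | hQ
  · simpa using one_le_two.trans hc
  · have hpos := Nat.clog_pos hc hQ
    rw [← Nat.sub_one_add_one hpos.ne', pow_succ']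
    exact Nat.mul_le_mul_left c (Nat.pow_pred_clog_lt_self hc hQ).le

lemma volume_preimage_pow_clog_inter_le {G : Set ℝ} (hG : MeasurableSet G)
    (hper : Function.Periodic (· ∈ G) 1) (hc : 2 ≤ c) (hQ : 0 < Q) (a : ℝ) :
    volume ((((c : ℝ) ^ Nat.clog c Q) * ·) ⁻¹' G ∩ Set.Ico a (a + 1 / Q)) ≤
      ENNReal.ofReal (1 / Q) * (c * unitVolume G) := by
  have hQ' : (0 : ℝ) < Q := mod_cast hQ
  have hpow : (0 : ℝ) < (c : ℝ) ^ Nat.clog c Q := by positivity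
  have hlower : 1 / (Q : ℝ) ≤ c / (c : ℝ) ^ Nat.clog c Q := by
    rw [div_le_div_iff₀ hQ' hpow, one_mul]
    exact_mod_cast pow_clog_le_mul hc hQ
  have hupper : (c : ℝ) / (c : ℝ) ^ Nat.clog c Q ≤ 1 / Q * c := by
    rw [div_mul_eq_mul_div, one_mul]
    gcongr
    exact_mod_cast Nat.le_pow_clog hc Q
  calc _ ≤ volume ((((c : ℝ) ^ Nat.clog c Q) * ·) ⁻¹' G ∩
          Set.Ico a (a + c / (c : ℝ) ^ Nat.clog c Q)) := by gcongr
    _ = ENNReal.ofReal (c / (c : ℝ) ^ Nat.clog c Q) * unitVolume G :=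
        volume_preimage_mul_inter_Ico hG hper hpow a c
    _ ≤ ENNReal.ofReal (1 / Q * c) * unitVolume G := by gcongr
    _ = _ := by rw [ENNReal.ofReal_mul (by positivity), ENNReal.ofReal_natCast, mul_assoc]

/-- The points of a cell whose base-`c` digits past the depth of the cell violate the discrepancy
bound `δ * n + M`, for some `c ≤ k`. -/
def GridCell.discrepantPoints (I : GridCell) (k : ℕ) (δ : ℝ) (M : ℕ) : Set ℝ :=
  ⋃ s ∈ (Finset.Icc 2 k).sigma Finset.range,
    (((s.1 : ℝ) ^ I.depth s.1) * ·) ⁻¹' discrepantSet s.1 s.2 δ M ∩ Set.Ico I.left I.right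

lemma exists_volume_discrepantPoints_lt (k : ℕ) (hδ : 0 < δ) :
    ∃ M, ∀ I : GridCell, volume (I.discrepantPoints k δ M) < volume (Set.Ioo I.left I.right) := by
  have hsum : Tendsto (fun M => ∑ s ∈ (Finset.Icc 2 k).sigma Finset.range,
      (s.1 : ENNReal) * unitVolume (discrepantSet s.1 s.2 δ M)) atTop
      (𝓝 (∑ s ∈ (Finset.Icc 2 k).sigma Finset.range, (s.1 : ENNReal) * 0)) :=
    tendsto_finsetSum _ fun s hs => ENNReal.Tendsto.const_mul
      (tendsto_unitVolume_discrepantSet (Finset.mem_range.1 (Finset.mem_sigma.1 hs).2) hδ)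
      (Or.inr (ENNReal.natCast_ne_top _))
  simp only [mul_zero, Finset.sum_const_zero] at hsum
  obtain ⟨M, hM⟩ := (hsum.eventually (gt_mem_nhds one_pos)).exists
  refine ⟨M, fun I => ?_⟩
  have hlength : ENNReal.ofReal (1 / I.den) ≠ 0 := by
    simpa using I.den_pos.ne'
  calc volume (I.discrepantPoints k δ M)
      ≤ ∑ s ∈ (Finset.Icc 2 k).sigma Finset.range, ENNReal.ofReal (1 / I.den) *
          (s.1 * unitVolume (discrepantSet s.1 s.2 δ M)) := by
        refine (measure_biUnion_finset_le _ _).trans (Finset.sum_le_sum fun s hs => ?_)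
        rw [I.right_eq]
        exact volume_preimage_pow_clog_inter_le (measurableSet_discrepantSet s.1 s.2 δ M)
          (discrepantSet_periodic s.1 s.2 δ M)
          (Finset.mem_Icc.1 (Finset.mem_sigma.1 hs).1).1 I.den_pos I.left
    _ < ENNReal.ofReal (1 / I.den) * 1 := by
        rw [← Finset.mul_sum]
        exact ENNReal.mul_lt_mul_right hlength ENNReal.ofReal_ne_top hM
    _ = volume (Set.Ioo I.left I.right) := by
        rw [mul_one, Real.volume_Ioo, I.right_eq, add_sub_cancel_left]

theorem exists_absolutelyNormal_abs_discrepancy_sub_le (k : ℕ) (hδ : 0 < δ) :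
    ∃ M : ℕ, ∀ I : GridCell, ∃ y ∈ Set.Ioo I.left I.right, AbsolutelyNormal y ∧
      ∀ c ∈ Finset.Icc 2 k, ∀ d < c, ∀ n : ℕ,
        |discrepancy c d y (I.depth c + n) - discrepancy c d y (I.depth c)| ≤ δ * n + M := by
  obtain ⟨M, hM⟩ := exists_volume_discrepantPoints_lt k hδ
  refine ⟨M, fun I => ?_⟩
  have hsub : Set.Ioo I.left I.right ⊆ Set.Ico 0 1 := fun y hy =>
    ⟨I.left_nonneg.trans hy.1.le, hy.2.trans_le I.right_le_one⟩
  have hae : ∀ᵐ y ∂volume.restrict (Set.Ioo I.left I.right), AbsolutelyNormal y :=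
    ae_restrict_of_ae_restrict_of_subset hsub ae_absolutelyNormal
  obtain ⟨y, hy, hnormal, hpoint⟩ :
      ∃ y ∈ Set.Ioo I.left I.right, AbsolutelyNormal y ∧ y ∉ I.discrepantPoints k δ M := by
    by_contra! h
    refine (hM I).not_ge (measure_mono_ae ?_)
    filter_upwards [(ae_restrict_iff' measurableSet_Ioo).1 hae] with y hy hyI
      using h y hyI (hy hyI)
  refine ⟨y, hy, hnormal, fun c hc d hd n => ?_⟩
  by_contra! hlt
  refine hpoint (Set.mem_iUnion₂.2 ⟨⟨c, d⟩, Finset.mem_sigma.2 ⟨hc, Finset.mem_range.2 hd⟩,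
    ⟨n, ?_⟩, hy.1.le, hy.2⟩)
  rwa [discrepancy_pow_mul (by grind)]

end UniformBound

section Agreement

variable {c d j m n : ℕ} {k : ℤ} {x y : ℝ}

lemma rdigit_eq_zero_of_mem_Ico (hc : 0 < c)
    (hx : x ∈ Set.Ico ((k : ℝ) / (c : ℝ) ^ n) (k / (c : ℝ) ^ n + 1 / (c : ℝ) ^ m)) (hnj : n ≤ j)
    (hjm : j < m) : rdigit c x j = 0 := by
  obtain ⟨a, rfl⟩ := Nat.exists_eq_add_of_le hnj
  have hc' : (1 : ℝ) ≤ c := mod_cast hc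
  have hpow : (c : ℝ) ^ (n + a + 1) / (c : ℝ) ^ m ≤ 1 :=
    div_le_one_of_le₀ (pow_le_pow_right₀ hc' hjm) (by positivity)
  have hsplit : k / (c : ℝ) ^ n * (c : ℝ) ^ (n + a + 1) = k * (c : ℝ) ^ (a + 1) := by
    rw [add_assoc, pow_add]
    field_simp
  have hfloor : ⌊x * (c : ℝ) ^ (n + a + 1)⌋ = k * c ^ a * c := by
    rw [Int.floor_eq_iff]
    push_cast
    rw [mul_assoc, ← pow_succ, ← hsplit]
    constructor
    · exact mul_le_mul_of_nonneg_right hx.1 (by positivity)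
    · calc x * (c : ℝ) ^ (n + a + 1)
          < (k / (c : ℝ) ^ n + 1 / (c : ℝ) ^ m) * (c : ℝ) ^ (n + a + 1) :=
            mul_lt_mul_of_pos_right hx.2 (by positivity)
        _ ≤ _ := by rw [add_mul, one_div_mul_eq_div]; gcongr
  zify
  rw [natCast_rdigit hc, hfloor, Int.mul_emod_left]

lemma rdigit_eq_pred_of_mem_Ico (hc : 0 < c)
    (hx : x ∈ Set.Ico ((k : ℝ) / (c : ℝ) ^ n - 1 / (c : ℝ) ^ m) (k / (c : ℝ) ^ n)) (hnj : n ≤ j)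
    (hjm : j < m) : rdigit c x j = c - 1 := by
  obtain ⟨a, rfl⟩ := Nat.exists_eq_add_of_le hnj
  have hc' : (1 : ℝ) ≤ c := mod_cast hc
  have hpow : (c : ℝ) ^ (n + a + 1) / (c : ℝ) ^ m ≤ 1 :=
    div_le_one_of_le₀ (pow_le_pow_right₀ hc' hjm) (by positivity)
  have hsplit : k / (c : ℝ) ^ n * (c : ℝ) ^ (n + a + 1) = k * (c : ℝ) ^ (a + 1) := by
    rw [add_assoc, pow_add]
    field_simp
  have hfloor : ⌊x * (c : ℝ) ^ (n + a + 1)⌋ = (c - 1 : ℤ) + (k * c ^ a - 1) * c := by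
    have hrw : (c - 1 : ℤ) + (k * c ^ a - 1) * c = k * c ^ (a + 1) - 1 := by ring
    rw [hrw, Int.floor_eq_iff]
    push_cast
    rw [← hsplit, sub_add_cancel]
    constructor
    · calc _ ≤ (k / (c : ℝ) ^ n - 1 / (c : ℝ) ^ m) * (c : ℝ) ^ (n + a + 1) := by
            rw [sub_mul, one_div_mul_eq_div]; gcongr
        _ ≤ _ := mul_le_mul_of_nonneg_right hx.1 (by positivity)
    · exact mul_lt_mul_of_pos_right hx.2 (by positivity)
  zify [hc]
  rw [natCast_rdigit hc, hfloor, Int.add_mul_emod_self_right, Int.emod_eq_of_lt] <;> lia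

lemma floor_mul_pow_eq_of_abs_sub_lt (hc : 0 < c) (hxy : |x - y| < 1 / (c : ℝ) ^ m)
    (hzero : ∃ j, n ≤ j ∧ j < m ∧ rdigit c y j ≠ 0)
    (hpred : ∃ j, n ≤ j ∧ j < m ∧ rdigit c y j ≠ c - 1) :
    ⌊x * (c : ℝ) ^ n⌋ = ⌊y * (c : ℝ) ^ n⌋ := by
  have hpow : (0 : ℝ) < (c : ℝ) ^ n := by positivity
  obtain ⟨hlo, hhi⟩ := abs_lt.1 hxy
  have hfloor := Int.floor_le (y * (c : ℝ) ^ n)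
  have hfloor' := Int.lt_floor_add_one (y * (c : ℝ) ^ n)
  rw [← div_le_iff₀ hpow] at hfloor
  rw [← lt_div_iff₀ hpow] at hfloor'
  rw [Int.floor_eq_iff, ← div_le_iff₀ hpow, ← lt_div_iff₀ hpow]
  constructor
  · by_contra! hlt
    obtain ⟨j, hnj, hjm, hj⟩ := hzero
    exact hj (rdigit_eq_zero_of_mem_Ico hc ⟨hfloor, by linarith⟩ hnj hjm)
  · by_contra! hge
    obtain ⟨j, hnj, hjm, hj⟩ := hpred
    refine hj (rdigit_eq_pred_of_mem_Ico hc (k := ⌊y * (c : ℝ) ^ n⌋ + 1) ⟨?_, ?_⟩ hnj hjm) <;>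
      push_cast <;> linarith

lemma SimplyNormal.eventually_exists_rdigit_eq (h : SimplyNormal c y) (hd : d < c) {ε : ℝ}
    (hε : 0 < ε) : ∀ᶠ n : ℕ in atTop, ∀ m ≤ n, ε * n ≤ (n : ℝ) - m →
      ∃ j, m ≤ j ∧ j < n ∧ rdigit c y j = d := by
  have hc : (0 : ℝ) < c := mod_cast d.zero_le.trans_lt hd
  have hδ : 0 < ε / (4 * c) := by positivity
  obtain ⟨M, hM⟩ := exists_forall_abs_le_of_isLittleO ((simplyNormal_iff_isLittleO c y).1 h d hd) hδ
  have hlarge : ∀ᶠ n : ℕ in atTop, M < ε / (4 * c) * n :=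
    (tendsto_natCast_atTop_atTop.const_mul_atTop hδ).eventually_gt_atTop _
  filter_upwards [hlarge] with n hn m hmn hgap
  by_contra! hne
  have hsub := discrepancy_sub_of_forall_rdigit_ne hmn hne
  have hm : ε / (4 * c) * m ≤ ε / (4 * c) * n := by gcongr
  have hcontra : ε * n / c ≤ (n - m) / c := by gcongr
  have hfour : ε * n / c = 4 * (ε / (4 * c) * n) := by field_simp
  have := abs_le.1 (hM m)
  have := abs_le.1 (hM n)
  linarith

lemma SimplyNormal.eventually_exists_floor_eq (hc : 2 ≤ c) (h : SimplyNormal c y) {ε : ℝ}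
    (hε : 0 < ε) {P : ℕ → Prop} (hP : ∀ᶠ k in atTop, P k) :
    ∀ᶠ n : ℕ in atTop, ∃ m ≤ n, P m ∧ n ≤ (1 + ε) * m ∧
      ∀ x, |x - y| < 1 / (c : ℝ) ^ n → ⌊x * (c : ℝ) ^ m⌋ = ⌊y * (c : ℝ) ^ m⌋ := by
  have hε' : (0 : ℝ) < 1 + ε := by positivity
  have hκ : 0 < ε / (1 + ε) / 2 := by positivity
  have hdiv : Tendsto (fun n : ℕ => (n : ℝ) / (1 + ε)) atTop atTop :=
    tendsto_natCast_atTop_atTop.atTop_div_const hε'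
  have hlarge : ∀ᶠ n : ℕ in atTop, 1 ≤ ε / (1 + ε) / 2 * n :=
    (tendsto_natCast_atTop_atTop.const_mul_atTop hκ).eventually_ge_atTop _
  filter_upwards [h.eventually_exists_rdigit_eq (by lia : 0 < c) hκ,
    h.eventually_exists_rdigit_eq (by lia : 1 < c) hκ, hlarge,
    (tendsto_nat_ceil_atTop.comp hdiv).eventually hP] with n hdigit0 hdigit1 hn hPn
  have hceil : (⌈n / (1 + ε)⌉₊ : ℝ) < n / (1 + ε) + 1 := Nat.ceil_lt_add_one (by positivity)
  have hsplit : (n : ℝ) = n / (1 + ε) + 2 * (ε / (1 + ε) / 2 * n) := by field_simp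
  have hgap : ε / (1 + ε) / 2 * n ≤ n - ⌈n / (1 + ε)⌉₊ := by linarith
  have hle : ⌈n / (1 + ε)⌉₊ ≤ n := by
    rw [← Nat.cast_le (α := ℝ)]
    linarith
  refine ⟨_, hle, hPn, ?_, fun x hx => ?_⟩
  · rw [← div_le_iff₀' hε']
    exact Nat.le_ceil _
  · obtain ⟨i, hi, hin, hi0⟩ := hdigit0 _ hle hgap
    obtain ⟨j, hj, hjn, hj1⟩ := hdigit1 _ hle hgap
    exact floor_mul_pow_eq_of_abs_sub_lt (by lia) hx ⟨j, hj, hjn, by lia⟩ ⟨i, hi, hin, by lia⟩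

variable {b e : ℕ}

lemma clog_pow_add_le (hc : 2 ≤ c) (hb : 0 < b) (he : 0 < e) (m : ℕ) :
    (Nat.clog c (b ^ (e * m + m)) : ℝ) ≤ (1 + 1 / e) * Nat.log c (b ^ (e * m)) + (e + 1) := by
  have hlog : e * Nat.log c (b ^ m) ≤ Nat.log c (b ^ (e * m)) := by
    refine Nat.le_log_of_pow_le hc ?_
    rw [mul_comm e, mul_comm e, pow_mul, pow_mul]
    exact Nat.pow_le_pow_left (Nat.pow_log_le_self c (by positivity)) e
  have hclog : Nat.clog c (b ^ (e * m + m)) ≤ (Nat.log c (b ^ m) + 1) * (e + 1) := by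
    refine Nat.clog_le_of_le_pow ?_
    rw [← Nat.succ_mul, mul_comm e.succ, pow_mul, pow_mul]
    exact Nat.pow_le_pow_left (Nat.lt_pow_succ_log_self hc _).le _
  have hlog' : (Nat.log c (b ^ m) : ℝ) ≤ Nat.log c (b ^ (e * m)) / e := by
    rw [le_div_iff₀' (mod_cast he)]
    exact_mod_cast hlog
  calc (Nat.clog c (b ^ (e * m + m)) : ℝ) ≤ (Nat.log c (b ^ m) + 1) * (e + 1) := mod_cast hclog
    _ = e * Nat.log c (b ^ m) + Nat.log c (b ^ m) + (e + 1) := by ring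
    _ ≤ Nat.log c (b ^ (e * m)) + Nat.log c (b ^ (e * m)) / e + (e + 1) := by
        gcongr
        exact_mod_cast hlog
    _ = _ := by ring

lemma tendsto_log_pow_mul (hc : 2 ≤ c) (hb : 2 ≤ b) (he : 0 < e) :
    Tendsto (fun m => Nat.log c (b ^ (e * m))) atTop atTop := by
  refine tendsto_atTop.2 fun K => ?_
  filter_upwards [eventually_ge_atTop (c ^ K)] with m hm
  refine Nat.le_log_of_pow_le hc (hm.trans ?_)
  exact (Nat.le_mul_of_pos_left m he).trans (Nat.lt_pow_self hb).le

lemma SimplyNormal.eventually_exists_floor_eq_of_pow (hc : 2 ≤ c) (h : SimplyNormal c y)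
    (hb : 2 ≤ b) (he : 0 < e) {δ : ℝ} (hδ : 0 < δ) {P : ℕ → Prop} (hP : ∀ᶠ k in atTop, P k) :
    ∀ᶠ m in atTop, ∃ n ≤ Nat.clog c (b ^ (e * m + m)), P n ∧
      Nat.clog c (b ^ (e * m + m)) ≤ (1 + (1 / e + δ)) * n ∧
      ∀ x, |x - y| < 1 / (b : ℝ) ^ (e * m) → ⌊x * (c : ℝ) ^ n⌋ = ⌊y * (c : ℝ) ^ n⌋ := by
  have hlarge : ∀ᶠ n : ℕ in atTop, (e + 1 : ℝ) ≤ δ / 2 * n :=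
    (tendsto_natCast_atTop_atTop.const_mul_atTop (half_pos hδ)).eventually_ge_atTop _
  filter_upwards [(tendsto_log_pow_mul hc hb he).eventually
    (h.eventually_exists_floor_eq hc (by positivity : 0 < δ / 4) (hP.and hlarge))]
    with m ⟨n, hn, ⟨hPn, hen⟩, hlog, hagree⟩
  refine ⟨n, hn.trans ?_, hPn, ?_, fun x hx => hagree x (hx.trans_le ?_)⟩
  · exact (Nat.log_le_clog c _).trans
      (Nat.clog_mono_right c (Nat.pow_le_pow_right (by lia) (Nat.le_add_right _ m)))
  · have he' : 1 / (e : ℝ) ≤ 1 := div_le_one_of_le₀ (mod_cast he) (by positivity)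
    calc (Nat.clog c (b ^ (e * m + m)) : ℝ)
        ≤ (1 + 1 / e) * Nat.log c (b ^ (e * m)) + (e + 1) := clog_pow_add_le hc (by lia) he m
      _ ≤ (1 + 1 / e) * ((1 + δ / 4) * n) + δ / 2 * n := by gcongr
      _ = (1 + 1 / e + δ / 2) * n + 1 / e * (δ / 4 * n) + δ / 4 * n := by ring
      _ ≤ (1 + 1 / e + δ / 2) * n + 1 * (δ / 4 * n) + δ / 4 * n := by gcongr
      _ = (1 + (1 / e + δ)) * n := by ring
  · gcongr
    exact_mod_cast Nat.pow_log_le_self c (by positivity)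

lemma abs_discrepancy_sub_le_of_le_mul (hc : 0 < c) (hmn : m ≤ n) {α δ M z : ℝ}
    (hαδ : 0 ≤ α + δ) (hn : n ≤ (1 + α) * m) (h : |discrepancy c d x m - z| ≤ δ * m + M) :
    |discrepancy c d x n - z| ≤ (α + δ) * n + M := by
  have hmn' : (α + δ) * m ≤ (α + δ) * n := by gcongr
  calc |discrepancy c d x n - z|
      ≤ |discrepancy c d x n - discrepancy c d x m| + |discrepancy c d x m - z| :=
        abs_sub_le _ _ _
    _ ≤ (n - m) + (δ * m + M) := add_le_add (abs_discrepancy_sub_le hc d x hmn) h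
    _ ≤ (α + δ) * n + M := by linarith

end Agreement

section Padding

variable {b : ℕ} {x y : ℝ}

/-- The cell of the points whose first `n` base-`b` digits are those of `y` and whose next `m`
digits vanish. -/
noncomputable def paddedCell (hb : 0 < b) (hy : y ∈ Set.Ico (0 : ℝ) 1) (n m : ℕ) : GridCell where
  num := ⌊y * (b : ℝ) ^ n⌋₊ * b ^ m
  den := b ^ (n + m)
  num_lt_den := by
    rw [pow_add]
    refine Nat.mul_lt_mul_of_pos_right (Nat.floor_lt' (by positivity) |>.2 ?_) (by positivity)
    push_cast
    exact mul_lt_of_lt_one_left (by positivity) hy.2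

variable (hb : 0 < b) (hy : y ∈ Set.Ico (0 : ℝ) 1) (n m : ℕ)

lemma paddedCell_left : (paddedCell hb hy n m).left = ⌊y * (b : ℝ) ^ n⌋₊ / (b : ℝ) ^ n := by
  have : (0 : ℝ) < b := mod_cast hb
  simp only [GridCell.left, paddedCell, pow_add, Nat.cast_mul, Nat.cast_pow]
  field_simp

lemma paddedCell_right : (paddedCell hb hy n m).right =
    ⌊y * (b : ℝ) ^ n⌋₊ / (b : ℝ) ^ n + 1 / (b : ℝ) ^ (n + m) := by
  rw [GridCell.right_eq, paddedCell_left]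
  simp only [paddedCell, Nat.cast_pow]

lemma paddedCell_left_mem_Ioc : (paddedCell hb hy n m).left ∈ Set.Ioc (y - 1 / (b : ℝ) ^ n) y := by
  have hpow : (0 : ℝ) < (b : ℝ) ^ n := by positivity
  rw [paddedCell_left]
  constructor
  · rw [sub_lt_iff_lt_add, ← add_div, lt_div_iff₀ hpow]
    exact Nat.lt_floor_add_one _
  · rw [div_le_iff₀ hpow]
    exact Nat.floor_le (mul_nonneg hy.1 hpow.le)

lemma paddedCell_right_le : (paddedCell hb hy n m).right ≤ y + 1 / (b : ℝ) ^ n := by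
  have hle : 1 / (b : ℝ) ^ (n + m) ≤ 1 / (b : ℝ) ^ n := by
    gcongr
    · exact_mod_cast hb
    · exact Nat.le_add_right n m
  rw [paddedCell_right, ← paddedCell_left hb hy n m]
  linarith [(paddedCell_left_mem_Ioc hb hy n m).2]

variable {hb hy n m}

lemma abs_sub_lt_of_mem_paddedCell
    (hx : x ∈ Set.Ioo (paddedCell hb hy n m).left (paddedCell hb hy n m).right) :
    |x - y| < 1 / (b : ℝ) ^ n := by
  rw [abs_sub_lt_iff]
  constructor
  · linarith [hx.2, paddedCell_right_le hb hy n m]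
  · linarith [hx.1, (paddedCell_left_mem_Ioc hb hy n m).1]

lemma rdigit_eq_zero_of_mem_paddedCell
    (hx : x ∈ Set.Ioo (paddedCell hb hy n m).left (paddedCell hb hy n m).right) {j : ℕ}
    (hnj : n ≤ j) (hj : j < n + m) : rdigit b x j = 0 := by
  rw [paddedCell_left, paddedCell_right] at hx
  exact rdigit_eq_zero_of_mem_Ico hb (k := (⌊y * (b : ℝ) ^ n⌋₊ : ℤ))
    (Set.Ioo_subset_Ico_self (by simpa only [Int.cast_natCast] using hx)) hnj hj

end Padding

/-- `J` lies strictly inside `I`; past the depth of `I`, the digits of the points of `J` are close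
to equidistributed in every base `c ≤ k` (up to the lag `M`); yet `J` prescribes a block of at least
`N` zeros in base `b` that follows `e` times as many digits. -/
structure GridCell.IsPaddedRefinement (I J : GridCell) (b e k N M : ℕ) (δ : ℝ) : Prop where
  left_lt : I.left < J.left
  right_lt : J.right < I.right
  le_depth : ∀ c ∈ Finset.Icc 2 k, N ≤ J.depth c
  exists_zero_block : ∃ m ≥ N, ∀ x ∈ Set.Ioo J.left J.right, ∀ j, e * m ≤ j → j < e * m + m →
    rdigit b x j = 0
  abs_discrepancy_sub_le : ∀ x ∈ Set.Ioo J.left J.right, ∀ c ∈ Finset.Icc 2 k, ∀ d < c,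
    ∀ n, I.depth c ≤ n → n ≤ J.depth c →
      |discrepancy c d x n - discrepancy c d x (I.depth c)| ≤ (1 / e + 2 * δ) * n + M
  abs_discrepancy_le : ∀ x ∈ Set.Ioo J.left J.right, ∀ c ∈ Finset.Icc 2 k, ∀ d < c,
    |discrepancy c d x (J.depth c)| ≤ (1 / e + 2 * δ) * J.depth c

section Refinement

variable {b c d e k l n s M : ℕ} {x y δ : ℝ} {I : GridCell}

lemma SimplyNormal.eventually_forall_abs_discrepancy_le (h : SimplyNormal c y) (hδ : 0 < δ) :
    ∀ᶠ n : ℕ in atTop, ∀ d < c, |discrepancy c d y n| ≤ δ * n := by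
  refine (Set.finite_lt_nat c).eventually_all.2 fun d hd => ?_
  filter_upwards [isLittleO_iff.1 ((simplyNormal_iff_isLittleO c y).1 h d hd) hδ] with n hn
  simpa using hn

lemma abs_discrepancy_sub_le_of_floor_eq (hc : 0 < c)
    (hxy : ⌊x * (c : ℝ) ^ n⌋ = ⌊y * (c : ℝ) ^ n⌋) {α M : ℝ} (hα : 0 ≤ α) (hδ : 0 ≤ δ) (hsn : s ≤ n)
    (hy : ∀ l : ℕ, |discrepancy c d y (s + l) - discrepancy c d y s| ≤ δ * l + M)
    (hsl : s ≤ l) (hl : l ≤ (1 + α) * n) :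
    |discrepancy c d x l - discrepancy c d x s| ≤ (α + δ) * l + M := by
  have hcopy : ∀ l, s ≤ l → l ≤ n →
      |discrepancy c d x l - discrepancy c d x s| ≤ δ * l + M := fun l hsl hln => by
    obtain ⟨a, rfl⟩ := Nat.exists_eq_add_of_le hsl
    rw [discrepancy_eq_of_floor_eq hc d hxy hln, discrepancy_eq_of_floor_eq hc d hxy hsn]
    refine (hy a).trans ?_
    gcongr
    exact Nat.le_add_left a s
  rcases le_total l n with hln | hnl
  · refine (hcopy l hsl hln).trans ?_
    gcongr
    exact le_add_of_nonneg_left hα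
  · exact abs_discrepancy_sub_le_of_le_mul hc hnl (by positivity) hl (hcopy n hsn le_rfl)

lemma tendsto_one_div_pow_mul (hb : 2 ≤ b) (he : 0 < e) :
    Tendsto (fun m : ℕ => 1 / (b : ℝ) ^ (e * m)) atTop (𝓝 0) := by
  simp only [one_div]
  exact ((tendsto_pow_atTop_atTop_of_one_lt (mod_cast hb)).comp
    (tendsto_id.const_mul_atTop' he)).inv_tendsto_atTop

lemma AbsolutelyNormal.eventually_isPaddedRefinement (h : AbsolutelyNormal y)
    (hy : y ∈ Set.Ioo I.left I.right) (hy' : y ∈ Set.Ico (0 : ℝ) 1) (hδ : 0 < δ)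
    (hyM : ∀ c ∈ Finset.Icc 2 k, ∀ d < c, ∀ n : ℕ,
      |discrepancy c d y (I.depth c + n) - discrepancy c d y (I.depth c)| ≤ δ * n + M)
    (hb : 2 ≤ b) (he : 0 < e) (N : ℕ) :
    ∀ᶠ m in atTop,
      I.IsPaddedRefinement (paddedCell (two_pos.trans_le hb) hy' (e * m) m) b e k N M δ := by
  have hb' := two_pos.trans_le hb
  have hgap : 0 < min (y - I.left) (I.right - y) := lt_min (sub_pos.2 hy.1) (sub_pos.2 hy.2)
  have hsmall := (tendsto_one_div_pow_mul hb he).eventually (gt_mem_nhds hgap)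
  have hagree := (eventually_all_finset (Finset.Icc 2 k)).2 fun c hc =>
    have hc := (Finset.mem_Icc.1 hc).1
    have hnormal := (absolutelyNormal_iff y).1 h c hc
    hnormal.eventually_exists_floor_eq_of_pow hc hb he hδ
      ((eventually_ge_atTop (max (I.depth c) N)).and
        (hnormal.eventually_forall_abs_discrepancy_le hδ))
  filter_upwards [hsmall, hagree, eventually_ge_atTop N] with m hm hagree hNm
  obtain ⟨hm, hm'⟩ := lt_min_iff.1 hm
  have hα : (0 : ℝ) ≤ 1 / e + δ := by positivity
  have hrate : 1 / (e : ℝ) + 2 * δ = 1 / e + δ + δ := by ring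
  refine ⟨?_, ?_, fun c hc => ?_, ⟨m, hNm, fun x hx j => rdigit_eq_zero_of_mem_paddedCell hx⟩,
    fun x hx c hc d hd l hIl hlJ => ?_, fun x hx c hc d hd => ?_⟩
  · linarith [(paddedCell_left_mem_Ioc hb' hy' (e * m) m).1]
  · linarith [paddedCell_right_le hb' hy' (e * m) m]
  · obtain ⟨n, hn, ⟨hIn, -⟩, -⟩ := hagree c hc
    exact (le_max_right _ N).trans (hIn.trans hn)
  · obtain ⟨n, -, ⟨hIn, -⟩, hJn, hxy⟩ := hagree c hc
    rw [hrate]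
    exact abs_discrepancy_sub_le_of_floor_eq (d.zero_le.trans_lt hd)
      (hxy x (abs_sub_lt_of_mem_paddedCell hx)) hα hδ.le ((le_max_left _ N).trans hIn)
      (hyM c hc d hd) hIl ((Nat.cast_le.2 hlJ).trans hJn)
  · obtain ⟨n, hnJ, ⟨-, hn⟩, hJn, hxy⟩ := hagree c hc
    have hc : 0 < c := d.zero_le.trans_lt hd
    have hxn : |discrepancy c d x n - 0| ≤ δ * n + 0 := by
      rw [discrepancy_eq_of_floor_eq hc d (hxy x (abs_sub_lt_of_mem_paddedCell hx)) le_rfl]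
      simpa using hn d hd
    have hxJ := abs_discrepancy_sub_le_of_le_mul hc hnJ (by positivity) hJn hxn
    rw [sub_zero, add_zero] at hxJ
    rwa [hrate]

theorem exists_isPaddedRefinement (k : ℕ) (hδ : 0 < δ) :
    ∃ M, ∀ (I : GridCell) {b e : ℕ}, 2 ≤ b → 0 < e → ∀ N, ∃ J,
      I.IsPaddedRefinement J b e k N M δ := by
  obtain ⟨M, hM⟩ := exists_absolutelyNormal_abs_discrepancy_sub_le k hδ
  refine ⟨M, fun I b e hb he N => ?_⟩
  obtain ⟨y, hy, hnormal, hyM⟩ := hM I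
  have hy' : y ∈ Set.Ico (0 : ℝ) 1 :=
    ⟨I.left_nonneg.trans hy.1.le, hy.2.trans_le I.right_le_one⟩
  obtain ⟨m, hm⟩ := (hnormal.eventually_isPaddedRefinement hy hy' hδ hyM hb he N).exists
  exact ⟨_, hm⟩

end Refinement

section Construction

variable (f : ℕ → ℕ) (i : ℕ)

/-- The tolerance at stage `i`. -/
noncomputable def stageTolerance (i : ℕ) : ℝ := 1 / (i + 1)

lemma stageTolerance_pos : 0 < stageTolerance i := Nat.one_div_pos_of_nat

/-- The lag after which the refinements at stage `i` can be held to `stageTolerance i` in all bases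
up to `i + 2`. -/
noncomputable def stageLag (i : ℕ) : ℕ :=
  (exists_isPaddedRefinement (i + 2) (stageTolerance_pos i)).choose

/-- A depth at which the lag of the next stage is within the tolerance of that stage. -/
noncomputable def stageDepth (i : ℕ) : ℕ := (i + 2) * stageLag (i + 1) + (i + 1)

lemma lt_stageDepth : i < stageDepth i := i.lt_succ_self.trans_le (Nat.le_add_left _ _)

lemma stageLag_le_mul {n : ℕ} (h : stageDepth i ≤ n) :
    stageLag (i + 1) ≤ stageTolerance (i + 1) * n := by
  have hle : (i + 2) * stageLag (i + 1) ≤ n := (Nat.le_add_right _ _).trans h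
  have hle' : ((i : ℝ) + 2) * stageLag (i + 1) ≤ n := mod_cast hle
  rw [stageTolerance, one_div_mul_eq_div, le_div_iff₀ (by positivity)]
  push_cast
  linarith

/-- A surjection onto the bases, each of which is attained at arbitrarily large values. -/
def codedBase (v : ℕ) : ℕ := v.unpair.1 + 2

lemma two_le_codedBase (v : ℕ) : 2 ≤ codedBase v := Nat.le_add_left 2 _

lemma exists_nextCell (v : ℕ) (I : GridCell) : ∃ J, I.IsPaddedRefinement J (codedBase v) (v + 1)
    (i + 2) (stageDepth i) (stageLag i) (stageTolerance i) :=
  (exists_isPaddedRefinement (i + 2) (stageTolerance_pos i)).choose_spec I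
    (two_le_codedBase v) v.succ_pos (stageDepth i)

/-- The cells nested around the point attached to `f`. -/
noncomputable def stageCell (f : ℕ → ℕ) : ℕ → GridCell
  | 0 => ⟨0, 1, one_pos⟩
  | i + 1 => (exists_nextCell i (f i) (stageCell f i)).choose

lemma isPaddedRefinement_stageCell :
    (stageCell f i).IsPaddedRefinement (stageCell f (i + 1)) (codedBase (f i)) (f i + 1)
      (i + 2) (stageDepth i) (stageLag i) (stageTolerance i) :=
  (exists_nextCell i (f i) (stageCell f i)).choose_spec

lemma continuous_stageCell : Continuous (stageCell · i) := by
  induction i with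
  | zero => exact continuous_const
  | succ i ih =>
    have hnext : Continuous fun p : ℕ × GridCell => (exists_nextCell i p.1 p.2).choose :=
      continuous_of_discreteTopology
    exact hnext.comp ((continuous_apply i).prodMk ih)

/-- The point common to the cells `stageCell f i`. -/
noncomputable def limitPoint (f : ℕ → ℕ) : ℝ := ⨆ i, (stageCell f i).left

lemma limitPoint_mem_Icc : limitPoint f ∈ Set.Icc (stageCell f i).left (stageCell f i).right :=
  Set.mem_iInter.1 (Monotone.ciSup_mem_iInter_Icc_of_antitone
    (monotone_nat_of_le_succ fun i => (isPaddedRefinement_stageCell f i).left_lt.le)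
    (antitone_nat_of_succ_le fun i => (isPaddedRefinement_stageCell f i).right_lt.le)
    fun i => (stageCell f i).left_lt_right.le) i

lemma limitPoint_mem_Ioo : limitPoint f ∈ Set.Ioo (stageCell f i).left (stageCell f i).right :=
  have hstep := isPaddedRefinement_stageCell f i
  have hmem := limitPoint_mem_Icc f (i + 1)
  ⟨hstep.left_lt.trans_le hmem.1, hmem.2.trans_lt hstep.right_lt⟩

lemma limitPoint_mem_unitInterval : limitPoint f ∈ Set.Icc (0 : ℝ) 1 :=
  have hmem := limitPoint_mem_Icc f 0
  ⟨(stageCell f 0).left_nonneg.trans hmem.1, hmem.2.trans (stageCell f 0).right_le_one⟩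

lemma lt_den_stageCell_succ : i < (stageCell f (i + 1)).den :=
  calc i < stageDepth i := lt_stageDepth i
    _ ≤ (stageCell f (i + 1)).depth 2 :=
        (isPaddedRefinement_stageCell f i).le_depth 2 (Finset.mem_Icc.2 ⟨le_rfl, by lia⟩)
    _ ≤ (stageCell f (i + 1)).den := Nat.clog_le_of_le_pow Nat.lt_two_pow_self.le

lemma dist_limitPoint_left_le : dist (limitPoint f) (stageCell f (i + 1)).left ≤ 1 / (i + 1) := by
  have hmem := limitPoint_mem_Icc f (i + 1)
  rw [GridCell.right_eq] at hmem
  have hden : (i + 1 : ℝ) ≤ (stageCell f (i + 1)).den := mod_cast lt_den_stageCell_succ f i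
  calc dist (limitPoint f) (stageCell f (i + 1)).left
      = limitPoint f - (stageCell f (i + 1)).left := by
        rw [Real.dist_eq, abs_of_nonneg (sub_nonneg.2 hmem.1)]
    _ ≤ 1 / (stageCell f (i + 1)).den := by linarith [hmem.2]
    _ ≤ 1 / (i + 1) := by gcongr

lemma continuous_limitPoint : Continuous limitPoint := by
  have huniform : TendstoUniformly (fun i f => (stageCell f (i + 1)).left) limitPoint atTop := by
    refine Metric.tendstoUniformly_iff.2 fun ε hε => ?_
    filter_upwards [tendsto_one_div_add_atTop_nhds_zero_nat.eventually (gt_mem_nhds hε)]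
      with i hi f using (dist_limitPoint_left_le f i).trans_lt hi
  exact huniform.continuous (.of_forall fun i =>
    (continuous_of_discreteTopology (f := GridCell.left)).comp (continuous_stageCell (i + 1)))

end Construction

section Abnormality

variable {c d e v : ℕ} {x : ℝ} {f : ℕ → ℕ}

lemma not_simplyNormal_of_frequently_rdigit_eq (hc : 2 ≤ c)
    (h : ∃ᶠ m in atTop, ∀ j, e * m ≤ j → j < e * m + m → rdigit c x j = d) :
    ¬ SimplyNormal c x := fun hnormal => by
  obtain ⟨d', hd', hne⟩ : ∃ d' < c, d' ≠ d := by
    rcases eq_or_ne d 0 with rfl | hd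
    exacts [⟨1, hc, one_ne_zero⟩, ⟨0, two_pos.trans_le hc, hd.symm⟩]
  have hε : (0 : ℝ) < 1 / (e + 1) := Nat.one_div_pos_of_nat
  have htendsto : Tendsto (fun m => e * m + m) atTop atTop :=
    tendsto_atTop_mono (fun m => Nat.le_add_left m _) tendsto_id
  obtain ⟨m, hblock, hmissing⟩ := (h.and_eventually
    (htendsto.eventually (hnormal.eventually_exists_rdigit_eq hd' hε))).exists
  have hgap : 1 / (e + 1 : ℝ) * (e * m + m : ℕ) = (e * m + m : ℕ) - (e * m : ℕ) := by
    push_cast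
    field_simp
    ring
  obtain ⟨j, hj, hj', hjd'⟩ := hmissing (e * m) (Nat.le_add_right _ m) hgap.le
  exact hne (hjd'.symm.trans (hblock j hj hj'))

theorem not_normalBase_limitPoint (hv : {i | f i = v}.Infinite) :
    ¬ NormalBase (codedBase v) (limitPoint f) := fun h => by
  have hsimple := h 1 le_rfl
  rw [pow_one] at hsimple
  refine not_simplyNormal_of_frequently_rdigit_eq (d := 0) (e := v + 1) (two_le_codedBase v)
    (frequently_atTop.2 fun N => ?_) hsimple
  obtain ⟨i, rfl, hi⟩ := hv.exists_gt N
  obtain ⟨m, hm, hzero⟩ := (isPaddedRefinement_stageCell f i).exists_zero_block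
  exact ⟨m, hi.le.trans ((lt_stageDepth i).le.trans hm), hzero _ (limitPoint_mem_Ioo f (i + 1))⟩

end Abnormality

section Normality

variable {c d i n : ℕ} {f : ℕ → ℕ}

lemma isLittleO_of_abs_le_mul_on_blocks {g θ : ℕ → ℝ} {t : ℕ → ℕ} (ht : Tendsto t atTop atTop)
    (hθ : Tendsto θ atTop (𝓝 0))
    (h : ∀ᶠ i in atTop, ∀ n, t i ≤ n → n ≤ t (i + 1) → |g n| ≤ θ i * n) :
    g =o[atTop] fun n : ℕ => (n : ℝ) := by
  refine isLittleO_iff.2 fun ε hε => ?_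
  obtain ⟨i₀, hi₀⟩ := eventually_atTop.1 (h.and (hθ.eventually (gt_mem_nhds hε)))
  filter_upwards [eventually_ge_atTop (t i₀)] with n hn
  obtain ⟨i, hi, hin, hni⟩ : ∃ i ≥ i₀, t i ≤ n ∧ n ≤ t (i + 1) := by
    by_contra! hlt
    have hbdd : ∀ i ≥ i₀, t i ≤ n := fun i hi => by
      induction i, hi using Nat.le_induction with
      | base => exact hn
      | succ i hi ih => exact (hlt i hi ih).le
    obtain ⟨i, hi, hni⟩ := ((eventually_ge_atTop i₀).and (ht.eventually_gt_atTop n)).exists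
    exact (hbdd i hi).not_gt hni
  rw [Real.norm_eq_abs, Real.norm_natCast]
  exact ((hi₀ i hi).1 n hin hni).trans (by gcongr; exact (hi₀ i hi).2.le)

/-- The bound on the relative discrepancy that stage `i` guarantees. -/
noncomputable def stageRate (f : ℕ → ℕ) (i : ℕ) : ℝ :=
  1 / ((f i + 1 : ℕ) : ℝ) + 2 * stageTolerance i

lemma tendsto_stageTolerance : Tendsto stageTolerance atTop (𝓝 0) :=
  tendsto_one_div_add_atTop_nhds_zero_nat

lemma tendsto_stageRate (hf : Tendsto f atTop atTop) : Tendsto (stageRate f) atTop (𝓝 0) := by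
  have hinv : Tendsto (fun i => 1 / ((f i + 1 : ℕ) : ℝ)) atTop (𝓝 0) := by
    simp only [Nat.cast_add_one]
    exact tendsto_one_div_add_atTop_nhds_zero_nat.comp hf
  have hsum := hinv.add (tendsto_stageTolerance.const_mul 2)
  rwa [mul_zero, add_zero] at hsum

lemma abs_discrepancy_limitPoint_le (hc : c ∈ Finset.Icc 2 (i + 2)) (hd : d < c)
    (hn : (stageCell f (i + 1)).depth c ≤ n) (hn' : n ≤ (stageCell f (i + 2)).depth c) :
    |discrepancy c d (limitPoint f) n| ≤
      (stageRate f i + stageRate f (i + 1) + stageTolerance (i + 1)) * n := by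
  have hstep := isPaddedRefinement_stageCell f i
  have hrate : 0 ≤ stageRate f i := by
    have := stageTolerance_pos i
    unfold stageRate
    positivity
  have hc' : c ∈ Finset.Icc 2 (i + 1 + 2) := Finset.Icc_subset_Icc_right (by lia) hc
  have hstart := hstep.abs_discrepancy_le _ (limitPoint_mem_Ioo f (i + 1)) c hc d hd
  have hgrow := (isPaddedRefinement_stageCell f (i + 1)).abs_discrepancy_sub_le _
    (limitPoint_mem_Ioo f (i + 2)) c hc' d hd n hn hn'
  have hlag := stageLag_le_mul i ((hstep.le_depth c hc).trans hn)
  calc |discrepancy c d (limitPoint f) n|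
      ≤ |discrepancy c d (limitPoint f) ((stageCell f (i + 1)).depth c)| +
          |discrepancy c d (limitPoint f) n -
            discrepancy c d (limitPoint f) ((stageCell f (i + 1)).depth c)| := by
        rw [← sub_le_iff_le_add']
        exact abs_sub_abs_le_abs_sub _ _
    _ ≤ stageRate f i * n +
          (stageRate f (i + 1) * n + stageTolerance (i + 1) * n) := by
        refine add_le_add (hstart.trans ?_) (hgrow.trans (add_le_add_right hlag _))
        exact mul_le_mul_of_nonneg_left (mod_cast hn) hrate
    _ = _ := by ring

lemma tendsto_depth_stageCell (hc : 2 ≤ c) :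
    Tendsto (fun i => (stageCell f (i + 1)).depth c) atTop atTop := by
  refine tendsto_atTop_mono' atTop ?_ tendsto_id
  filter_upwards [eventually_ge_atTop c] with i hi
  exact (lt_stageDepth i).le.trans
    ((isPaddedRefinement_stageCell f i).le_depth c (Finset.mem_Icc.2 ⟨hc, by lia⟩))

theorem absolutelyNormal_limitPoint (hf : Tendsto f atTop atTop) :
    AbsolutelyNormal (limitPoint f) := by
  refine (absolutelyNormal_iff _).2 fun c hc => (simplyNormal_iff_isLittleO c _).2 fun d hd => ?_
  have hrate := ((tendsto_stageRate hf).add ((tendsto_stageRate hf).comp (tendsto_add_atTop_nat 1))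
    ).add (tendsto_stageTolerance.comp (tendsto_add_atTop_nat 1))
  simp only [add_zero] at hrate
  refine isLittleO_of_abs_le_mul_on_blocks (tendsto_depth_stageCell (f := f) hc) hrate ?_
  filter_upwards [eventually_ge_atTop c] with i hi n hn hn'
  exact abs_discrepancy_limitPoint_le (Finset.mem_Icc.2 ⟨hc, by lia⟩) hd hn hn'

end Normality

theorem second_reduction_general :
    ∃ Ξ : (ℕ → ℕ) → ℝ, Continuous Ξ ∧ (∀ f, Ξ f ∈ Set.Icc (0 : ℝ) 1) ∧
      ∀ f : ℕ → ℕ, ((∀ x, {i | f i = x}.Finite) → AbsolutelyNormal (Ξ f)) ∧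
        ((∃ N, ∀ x, N ≤ x → {i | f i = x}.Infinite) → AbsolutelyAbnormal (Ξ f)) := by
  refine ⟨limitPoint, continuous_limitPoint, limitPoint_mem_unitInterval,
    fun f => ⟨fun hfinite => ?_, fun ⟨N, hinfinite⟩ b hb => ?_⟩⟩
  · refine absolutelyNormal_limitPoint ?_
    rw [← Nat.cofinite_eq_atTop]
    exact Tendsto.cofinite_of_finite_preimage_singleton hfinite
  · have hcode : codedBase (Nat.pair (b - 2) N) = b := by
      rw [codedBase, Nat.unpair_pair, Nat.sub_add_cancel hb]
    rw [← hcode]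
    exact not_normalBase_limitPoint (hinfinite _ (Nat.right_le_pair _ _))

/-- There is a continuous function `Ξ` from Baire space (sequences of positive
integers) to `[0,1] ⊆ ℝ` such that, for every `f` whose subsequence of first
occurrences enumerates the positive integers in increasing order: if no positive
integer occurs infinitely often in `f` then `Ξ f` is absolutely normal, and if all but
finitely many positive integers occur infinitely often in `f` then `Ξ f` is absolutely
abnormal. -/
theorem second_reduction :
    ∃ Ξ : (ℕ → ℕ) → ℝ, Continuous Ξ ∧ (∀ f, Ξ f ∈ Set.Icc (0 : ℝ) 1) ∧
      ∀ f : ℕ → ℕ, (∀ i, 1 ≤ f i) →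
        (∀ x : ℕ, 1 ≤ x → ∃ i, f i = x) →
        (∀ x : ℕ, 1 ≤ x → sInf {i | f i = x} < sInf {i | f i = x + 1}) →
        ((∀ x : ℕ, 1 ≤ x → {i : ℕ | f i = x}.Finite) → AbsolutelyNormal (Ξ f)) ∧
        ((∃ N : ℕ, ∀ x : ℕ, N ≤ x → {i : ℕ | f i = x}.Infinite) →
          AbsolutelyAbnormal (Ξ f)) := by
  obtain ⟨Ξ, hcont, hmem, hΞ⟩ := second_reduction_general
  refine ⟨Ξ, hcont, hmem, fun f hpos _ _ => ⟨fun hfinite => (hΞ f).1 fun x => ?_, (hΞ f).2⟩⟩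
  rcases x.eq_zero_or_pos with rfl | hx
  · exact Set.finite_empty.subset fun i hi => Nat.one_le_iff_ne_zero.1 (hpos i) hi
  · exact hfinite x hx
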